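/- arXiv:1906.09486 — 10 statements merged into one kernel-verified Lean document; each statement's English description precedes it below -/
import Mathlib

section
/- For every connected finite simple graph G on a vertex set V with at least 2 vertices and every vertex i of G, the function p ↦ D_i(p,G) is strictly increasing in p on the interval [0,1]. -/
/-!
For a monotone real function `f` on finite sets, consider its expectation on the random subset of
a finite set `E` that keeps each element independently with probability `p`. Conditioning on an
element `e` writes the expectation over `insert e E` as `(1 - p) A(p) + p B(p)`, where `A(p)` and
`B(p)` are the expectations over `E` of `f` and of `S ↦ f (insert e S)`. Since `A ≤ B` pointwise,
induction on `E` shows that the expectation is nondecreasing in `p`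
(`subsetExp_mono`), and strictly increasing as soon as `f ∅ < f E` (`subsetExp_strictMono`).

`expectedDocs G p i` is the expectation over the edge set of the number of vertices joined to `i`.
This number is monotone in the set of open edges; if `G` is connected with at least two vertices,
it is strictly larger for the full edge set than for the empty one.
-/

open Finset

/-- The edge set of a simple graph on a finite vertex type, as a `Finset`. -/
noncomputable def edgeFinset' {V : Type*} [Fintype V] (G : SimpleGraph V) :
    Finset (Sym2 V) := by
  classical exact Finset.univ.filter (fun e => e ∈ G.edgeSet)

open Classical in
/-- `transmissionProb G p i j` : the probability that `i` and `j` are joined by a path in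
the random subgraph of `G` in which each edge is retained independently with probability `p`:
the sum over all subsets `S` of the edge set of `p^|S| (1-p)^(|E(G)|-|S|)` times the indicator
that `i` and `j` are joined by a path in the subgraph with edge set `S`. -/
noncomputable def transmissionProb {V : Type*} [Fintype V] (G : SimpleGraph V)
    (p : ℝ) (i j : V) : ℝ :=
  ∑ S ∈ (edgeFinset' G).powerset,
    p ^ S.card * (1 - p) ^ ((edgeFinset' G).card - S.card) *
      (if (SimpleGraph.fromEdgeSet (↑S : Set (Sym2 V))).Reachable i j then 1 else 0)

/-- `expectedDocs G p i` : the expected number of documents obtained by vertex `i`,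
`D_i(p, G) = Σ_{j ∈ V} P_{ji}(p, G)`. -/
noncomputable def expectedDocs {V : Type*} [Fintype V] (G : SimpleGraph V)
    (p : ℝ) (i : V) : ℝ :=
  ∑ j, transmissionProb G p j i

/-- The expectation of `f S`, where `S` is the random subset of `E` keeping each element
independently with probability `p`. -/
noncomputable def subsetExp {α : Type*} (E : Finset α) (p : ℝ) (f : Finset α → ℝ) : ℝ :=
  ∑ S ∈ E.powerset, p ^ S.card * (1 - p) ^ (E.card - S.card) * f S

/-- Conditioning on whether `e` belongs to the random subset. -/
lemma subsetExp_insert {α : Type*} [DecidableEq α] {E : Finset α} {e : α} (he : e ∉ E) (p : ℝ)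
    (f : Finset α → ℝ) :
    subsetExp (insert e E) p f =
      (1 - p) * subsetExp E p f + p * subsetExp E p (fun S => f (insert e S)) := by
  unfold subsetExp
  rw [Finset.sum_powerset_insert he, Finset.mul_sum, Finset.mul_sum]
  congr 1
  · refine Finset.sum_congr rfl fun S hS => ?_
    have h := Finset.card_le_card (Finset.mem_powerset.1 hS)
    rw [Finset.card_insert_of_notMem he, Nat.sub_add_comm h, pow_succ]
    ring
  · refine Finset.sum_congr rfl fun S hS => ?_
    have heS : e ∉ S := fun h => he (Finset.mem_powerset.1 hS h)
    rw [Finset.card_insert_of_notMem he, Finset.card_insert_of_notMem heS,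
      Nat.add_sub_add_right, pow_succ]
    ring

lemma subsetExp_le {α : Type*} (E : Finset α) {p : ℝ} (h0 : 0 ≤ p) (h1 : p ≤ 1)
    {f g : Finset α → ℝ} (h : ∀ S, f S ≤ g S) : subsetExp E p f ≤ subsetExp E p g :=
  Finset.sum_le_sum fun S _ => mul_le_mul_of_nonneg_left (h S)
    (mul_nonneg (pow_nonneg h0 _) (pow_nonneg (sub_nonneg.2 h1) _))

/-- A strict inequality at `∅` survives in expectation, because for `p < 1` the empty set has
positive probability. -/
lemma subsetExp_lt {α : Type*} (E : Finset α) {p : ℝ} (h0 : 0 ≤ p) (h1 : p < 1)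
    {f g : Finset α → ℝ} (h : ∀ S, f S ≤ g S) (hlt : f ∅ < g ∅) :
    subsetExp E p f < subsetExp E p g := by
  refine Finset.sum_lt_sum (fun S _ => mul_le_mul_of_nonneg_left (h S)
    (mul_nonneg (pow_nonneg h0 _) (pow_nonneg (sub_nonneg.2 h1.le) _)))
    ⟨∅, Finset.empty_mem_powerset E, mul_lt_mul_of_pos_left hlt ?_⟩
  have := sub_pos.2 h1
  rw [Finset.card_empty, pow_zero, one_mul]
  positivity

lemma monotone_comp_insert {α : Type*} [DecidableEq α] {f : Finset α → ℝ} (hf : Monotone f)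
    (e : α) : Monotone (fun S => f (insert e S)) :=
  fun _ _ h => hf (Finset.insert_subset_insert e h)

lemma subsetExp_mono {α : Type*} (E : Finset α) {p q : ℝ} (h0 : 0 ≤ p)
    (hpq : p ≤ q) (h1 : q ≤ 1) {f : Finset α → ℝ} (hf : Monotone f) :
    subsetExp E p f ≤ subsetExp E q f := by
  classical
  induction E using Finset.induction_on generalizing f with
  | empty => simp [subsetExp]
  | insert e E he ih =>
    rw [subsetExp_insert he, subsetExp_insert he]
    have hA := ih hf
    have hB := ih (monotone_comp_insert hf e)
    have hAB := subsetExp_le E h0 (hpq.trans h1) fun S => hf (Finset.subset_insert e S)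
    linarith [mul_le_mul_of_nonneg_left hA (sub_nonneg.2 h1),
      mul_le_mul_of_nonneg_left hB (h0.trans hpq),
      mul_le_mul_of_nonneg_left hAB (sub_nonneg.2 hpq)]

lemma subsetExp_strictMono {α : Type*} (E : Finset α) {p q : ℝ} (h0 : 0 ≤ p)
    (hpq : p < q) (h1 : q ≤ 1) {f : Finset α → ℝ} (hf : Monotone f) (hlt : f ∅ < f E) :
    subsetExp E p f < subsetExp E q f := by
  classical
  induction E using Finset.induction_on generalizing f with
  | empty => exact absurd hlt (lt_irrefl _)
  | insert e E he ih =>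
    rw [subsetExp_insert he, subsetExp_insert he]
    have hf' := monotone_comp_insert hf e
    have hA := subsetExp_mono E h0 hpq.le h1 hf
    have hB := subsetExp_mono E h0 hpq.le h1 hf'
    have hAB := subsetExp_le E h0 (hpq.le.trans h1) fun S => hf (Finset.subset_insert e S)
    have hA' := mul_le_mul_of_nonneg_left hA (sub_nonneg.2 h1)
    -- The increase from `f ∅` to `f (insert e E)` occurs on adding `e` to `∅`, or afterwards.
    rcases lt_or_ge (f ∅) (f (insert e ∅)) with h | h
    · have hAB' := subsetExp_lt E h0 (hpq.trans_le h1)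
        (fun S => hf (Finset.subset_insert e S)) h
      linarith [mul_le_mul_of_nonneg_left hB (h0.trans hpq.le),
        mul_lt_mul_of_pos_left hAB' (sub_pos.2 hpq)]
    · have hB' := ih hf' (h.trans_lt hlt)
      linarith [mul_lt_mul_of_pos_left hB' (h0.trans_lt hpq),
        mul_le_mul_of_nonneg_left hAB (sub_nonneg.2 hpq.le)]

open Classical in
/-- The number of vertices joined to `i` by a path with edges in `S`. -/
noncomputable def reachCount {V : Type*} [Fintype V] (i : V) (S : Finset (Sym2 V)) : ℝ :=
  ∑ j, if (SimpleGraph.fromEdgeSet (↑S : Set (Sym2 V))).Reachable j i then 1 else 0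

lemma expectedDocs_eq_subsetExp {V : Type*} [Fintype V] (G : SimpleGraph V) (p : ℝ) (i : V) :
    expectedDocs G p i = subsetExp (edgeFinset' G) p (reachCount i) := by
  unfold expectedDocs transmissionProb subsetExp reachCount
  rw [Finset.sum_comm]
  simp only [Finset.mul_sum]

lemma reachIndicator_mono {V : Type*} (i j : V) {S T : Finset (Sym2 V)} (h : S ⊆ T)
    [Decidable ((SimpleGraph.fromEdgeSet (↑S : Set (Sym2 V))).Reachable j i)]
    [Decidable ((SimpleGraph.fromEdgeSet (↑T : Set (Sym2 V))).Reachable j i)] :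
    (if (SimpleGraph.fromEdgeSet (↑S : Set (Sym2 V))).Reachable j i then (1 : ℝ) else 0) ≤
      if (SimpleGraph.fromEdgeSet (↑T : Set (Sym2 V))).Reachable j i then 1 else 0 := by
  by_cases hS : (SimpleGraph.fromEdgeSet (↑S : Set (Sym2 V))).Reachable j i
  · have hT := hS.mono (SimpleGraph.fromEdgeSet_mono (Finset.coe_subset.2 h))
    rw [if_pos hS, if_pos hT]
  · rw [if_neg hS]
    split_ifs <;> norm_num

open Classical in
lemma reachCount_mono {V : Type*} [Fintype V] (i : V) : Monotone (reachCount i) :=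
  fun _ _ h => Finset.sum_le_sum fun j _ => reachIndicator_mono i j h

lemma fromEdgeSet_edgeFinset' {V : Type*} [Fintype V] (G : SimpleGraph V) :
    SimpleGraph.fromEdgeSet (↑(edgeFinset' G) : Set (Sym2 V)) = G := by
  have h : (↑(edgeFinset' G) : Set (Sym2 V)) = G.edgeSet := by
    ext e
    simp [edgeFinset']
  rw [h, SimpleGraph.fromEdgeSet_edgeSet]

open Classical in
lemma reachCount_empty_lt {V : Type*} [Fintype V] (G : SimpleGraph V)
    (hconn : G.Connected) (hcard : 2 ≤ Fintype.card V) (i : V) :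
    reachCount i ∅ < reachCount i (edgeFinset' G) := by
  have : Nontrivial V := Fintype.one_lt_card_iff_nontrivial.1 hcard
  obtain ⟨j, hj⟩ := exists_ne i
  refine Finset.sum_lt_sum (fun k _ => reachIndicator_mono i k (Finset.empty_subset _))
    ⟨j, Finset.mem_univ j, ?_⟩
  have hE : (SimpleGraph.fromEdgeSet (↑(edgeFinset' G) : Set (Sym2 V))).Reachable j i := by
    rw [fromEdgeSet_edgeFinset']
    exact hconn.preconnected j i
  rw [if_pos hE, if_neg]
  · exact one_pos
  · simpa using hj

/-- For every connected finite simple graph `G` on at least 2 vertices and every vertex `i`,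
the map `p ↦ D_i(p, G)` is strictly increasing on `[0,1]`. -/
theorem expectedDocs_strictMonoOn {V : Type*} [Fintype V] (G : SimpleGraph V)
    (hconn : G.Connected) (hcard : 2 ≤ Fintype.card V) (i : V) :
    StrictMonoOn (fun p => expectedDocs G p i) (Set.Icc (0 : ℝ) 1) := by
  intro p hp q hq hpq
  simp only [expectedDocs_eq_subsetExp]
  exact subsetExp_strictMono _ hp.1 hpq hq.2 (reachCount_mono i)
    (reachCount_empty_lt G hconn hcard i)
end

section
/- Let p ∈ [0,1] and for each integer k ≥ 1 let Q^k be the probability that the random subgraph of the complete graph K_k, obtained by retaining each edge independently with probability p, is connected. Then Q^1 = 1 and, for every n > 1, Q^n = 1 - Σ_{ℓ=1}^{n-1} C(n-1, ℓ-1) (1-p)^{ℓ(n-ℓ)} Q^ℓ, where C(·,·) denotes the binomial coefficient. -/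
/-!
Fix a vertex `0` of the complete graph on `n = N + 1` vertices and split according to the vertex
set `C` of its component in the random subgraph. The component is `C` exactly when the retained
edges inside `C` connect `C` and no edge between `C` and its complement is retained; the edges
inside the complement are free. As the three groups of edges are disjoint and there are
`|C| (n - |C|)` cut edges, this event has probability `(1-p)^{|C|(n-|C|)} Q^{|C|}`
(`sum_comp_eq`). There are `(n-1).choose (ℓ-1)` sets `C` of size `ℓ` containing `0`, so summing
over `C` gives a total of `1` (`sum_choose_connProb`). The term `ℓ = n` is `Q^n`, which yields the
recursion, and the case `n = 1` of the same identity is `Q^1 = 1`.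
-/

open Finset

open Classical in
/-- `connProb G p` : the probability that the random subgraph of `G`, retaining each edge
independently with probability `p`, is connected (as a spanning subgraph): the sum over all
subsets `S` of the edge set of `p^|S| (1-p)^(|E(G)|-|S|)` times the indicator that the
spanning subgraph with edge set `S` is connected. -/
noncomputable def connProb {V : Type*} [Fintype V] (G : SimpleGraph V) (p : ℝ) : ℝ :=
  ∑ S ∈ (edgeFinset' G).powerset,
    p ^ S.card * (1 - p) ^ ((edgeFinset' G).card - S.card) *
      (if (SimpleGraph.fromEdgeSet (↑S : Set (Sym2 V))).Connected then 1 else 0)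

/-! ### Edges inside a vertex set -/

/-- The edges of the complete graph on the vertex set `C`: the unordered pairs of distinct
elements of `C`. -/
def innerEdges {V : Type*} [DecidableEq V] (C : Finset V) : Finset (Sym2 V) :=
  C.offDiag.image (Function.uncurry Sym2.mk)

lemma mk_mem_innerEdges {V : Type*} [DecidableEq V] {C : Finset V} {x y : V} :
    s(x, y) ∈ innerEdges C ↔ x ∈ C ∧ y ∈ C ∧ x ≠ y := by
  simp only [innerEdges, mem_image, mem_offDiag, Prod.exists, Function.uncurry_apply_pair,
    Sym2.eq_iff]
  constructor
  · rintro ⟨a, b, ⟨ha, hb, hab⟩, ⟨rfl, rfl⟩ | ⟨rfl, rfl⟩⟩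
    · exact ⟨ha, hb, hab⟩
    · exact ⟨hb, ha, hab.symm⟩
  · rintro h
    exact ⟨x, y, h, Or.inl ⟨rfl, rfl⟩⟩

lemma card_innerEdges {V : Type*} [DecidableEq V] (C : Finset V) :
    (innerEdges C).card = C.card.choose 2 :=
  Sym2.card_image_offDiag C

lemma edgeFinset'_top {V : Type*} [Fintype V] [DecidableEq V] :
    edgeFinset' (⊤ : SimpleGraph V) = innerEdges univ := by
  ext e
  induction e with | _ x y =>
  simp [edgeFinset', mk_mem_innerEdges]

lemma innerEdges_map {V W : Type*} [DecidableEq V] [DecidableEq W] (f : V ↪ W) (C : Finset V) :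
    innerEdges (C.map f) = (innerEdges C).map f.sym2Map := by
  ext e
  induction e with | _ x y =>
  rw [mk_mem_innerEdges]
  simp only [mem_map, Function.Embedding.sym2Map_apply]
  constructor
  · rintro ⟨⟨a, ha, rfl⟩, ⟨b, hb, rfl⟩, hab⟩
    exact ⟨s(a, b), mk_mem_innerEdges.2 ⟨ha, hb, fun h => hab (h ▸ rfl)⟩, by simp⟩
  · rintro ⟨e, he, h⟩
    induction e with | _ a b =>
    rw [mk_mem_innerEdges] at he
    obtain ⟨ha, hb, hab⟩ := he
    rw [Sym2.map_mk, Sym2.eq_iff] at h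
    rcases h with ⟨rfl, rfl⟩ | ⟨rfl, rfl⟩
    · exact ⟨⟨a, ha, rfl⟩, ⟨b, hb, rfl⟩, fun h => hab (f.injective h)⟩
    · exact ⟨⟨b, hb, rfl⟩, ⟨a, ha, rfl⟩, fun h => hab (f.injective h.symm)⟩

/-! ### Reachability and transport along embeddings -/

/-- If every `G`-edge at a vertex of `C` stays inside `C` and is an `H`-edge, then a `G`-path
starting in `C` never leaves `C` and is an `H`-path. -/
lemma reachable_of_closed {V : Type*} {G H : SimpleGraph V} {C : Set V}
    (h : ∀ x ∈ C, ∀ y, G.Adj x y → y ∈ C ∧ H.Adj x y) {v x : V} (hv : v ∈ C)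
    (hx : G.Reachable v x) : x ∈ C ∧ H.Reachable v x := by
  rw [SimpleGraph.reachable_iff_reflTransGen] at hx
  induction hx with
  | refl => exact ⟨hv, .rfl⟩
  | tail _ hab ih =>
    obtain ⟨h1, h2⟩ := h _ ih.1 _ hab
    exact ⟨h1, ih.2.trans h2.reachable⟩

lemma reachable_map_embedding {V W : Type*} (f : V ↪ W) (S : Finset (Sym2 V)) (u v : V) :
    (SimpleGraph.fromEdgeSet (↑(S.map f.sym2Map) : Set (Sym2 W))).Reachable (f u) (f v) ↔
      (SimpleGraph.fromEdgeSet (↑S : Set (Sym2 V))).Reachable u v := by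
  have adj : ∀ a b, (SimpleGraph.fromEdgeSet (↑(S.map f.sym2Map) : Set (Sym2 W))).Adj (f a) b ↔
      ∃ c, b = f c ∧ (SimpleGraph.fromEdgeSet (↑S : Set (Sym2 V))).Adj a c := by
    intro a b
    simp only [SimpleGraph.fromEdgeSet_adj, mem_coe, mem_map, Function.Embedding.sym2Map_apply]
    constructor
    · rintro ⟨⟨e, he, h⟩, hne⟩
      induction e with | _ c d =>
      rw [Sym2.map_mk, Sym2.eq_iff] at h
      rcases h with ⟨h, rfl⟩ | ⟨rfl, h⟩
      · obtain rfl := f.injective h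
        exact ⟨d, rfl, he, fun h => hne (h ▸ rfl)⟩
      · obtain rfl := f.injective h
        exact ⟨c, rfl, by rwa [Sym2.eq_swap], fun h => hne (h ▸ rfl)⟩
    · rintro ⟨c, rfl, hc, hne⟩
      exact ⟨⟨_, hc, by simp⟩, fun h => hne (f.injective h)⟩
  constructor
  · intro h
    have key : ∀ y, Relation.ReflTransGen
        (SimpleGraph.fromEdgeSet (↑(S.map f.sym2Map) : Set (Sym2 W))).Adj (f u) y →
        ∃ c, y = f c ∧ (SimpleGraph.fromEdgeSet (↑S : Set (Sym2 V))).Reachable u c := by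
      intro y hy
      induction hy with
      | refl => exact ⟨u, rfl, .rfl⟩
      | tail _ hab ih =>
        obtain ⟨c, rfl, hc⟩ := ih
        obtain ⟨d, rfl, hd⟩ := (adj _ _).1 hab
        exact ⟨d, rfl, hc.trans hd.reachable⟩
    obtain ⟨c, hc, hr⟩ := key _ ((SimpleGraph.reachable_iff_reflTransGen _ _).1 h)
    rwa [f.injective hc]
  · intro h
    exact h.map (⟨f, fun {a b} hab => (adj _ _).2 ⟨b, rfl, hab⟩⟩ : _ →g _)

open Classical in
/-- `connProb` of the complete graph on `ℓ` vertices, computed on an `ℓ`-element subset `C` of a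
larger vertex type. Connectedness is expressed as reachability of all of `C` from a base point. -/
lemma connProb_eq_sum_innerEdges {V : Type*} [DecidableEq V] (p : ℝ) (C : Finset V) {v : V}
    (hv : v ∈ C) :
    connProb (⊤ : SimpleGraph (Fin C.card)) p =
      ∑ A ∈ (innerEdges C).powerset.filter fun A : Finset (Sym2 V) =>
          ∀ x ∈ C, (SimpleGraph.fromEdgeSet (↑A : Set (Sym2 V))).Reachable v x,
        p ^ A.card * (1 - p) ^ ((innerEdges C).card - A.card) := by
  let f : Fin C.card ↪ V := C.equivFin.symm.toEmbedding.trans (Function.Embedding.subtype _)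
  have hf : univ.map f = C := by
    ext x
    simp only [mem_map, mem_univ, true_and]
    constructor
    · rintro ⟨a, rfl⟩
      exact (C.equivFin.symm a).2
    · intro hx
      exact ⟨C.equivFin ⟨x, hx⟩, by simp [f]⟩
  have hE : innerEdges C = (innerEdges univ).map f.sym2Map := by rw [← innerEdges_map, hf]
  obtain ⟨u, rfl⟩ : ∃ u, f u = v := by
    rw [← hf] at hv
    simpa using hv
  have hconn : ∀ A : Finset (Sym2 (Fin C.card)),
      (SimpleGraph.fromEdgeSet (↑A : Set (Sym2 (Fin C.card)))).Connected ↔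
      ∀ x ∈ C, (SimpleGraph.fromEdgeSet (↑(A.map f.sym2Map) : Set (Sym2 V))).Reachable (f u) x := by
    intro A
    have h : (∀ x ∈ C, (SimpleGraph.fromEdgeSet
        (↑(A.map f.sym2Map) : Set (Sym2 V))).Reachable (f u) x) ↔
        ∀ x, (SimpleGraph.fromEdgeSet
          (↑(A.map f.sym2Map) : Set (Sym2 V))).Reachable (f u) (f x) := by
      constructor
      · exact fun h x => h _ (hf.subset (mem_map_of_mem f (mem_univ x)))
      · intro h x hx
        rw [← hf] at hx
        obtain ⟨a, -, rfl⟩ := mem_map.1 hx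
        exact h a
    rw [h]
    simp only [reachable_map_embedding]
    exact ⟨fun h x => h.preconnected u x,
      fun h => (SimpleGraph.connected_iff _).2 ⟨fun a b => (h a).symm.trans (h b), ⟨u⟩⟩⟩
  rw [connProb, edgeFinset'_top]
  simp only [mul_ite, mul_one, mul_zero]
  rw [← sum_filter]
  refine sum_bij (fun A _ => A.map f.sym2Map) ?_ ?_ ?_ ?_
  · intro A hA
    rw [mem_filter, mem_powerset] at hA ⊢
    exact ⟨hE ▸ map_subset_map.2 hA.1, (hconn A).1 hA.2⟩
  · intro A _ B _ h
    exact map_injective _ h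
  · intro B hB
    rw [mem_filter, mem_powerset, hE, subset_map_iff] at hB
    obtain ⟨⟨A, hA, rfl⟩, hB⟩ := hB
    exact ⟨A, mem_filter.2 ⟨mem_powerset.2 hA, (hconn A).2 hB⟩, rfl⟩
  · intro A _
    rw [hE, card_map, card_map]

/-! ### The component of a vertex -/

open Classical in
/-- The vertex set of the component of `v` in the graph with edge set `S`. -/
noncomputable def comp {V : Type*} [Fintype V] (v : V) (S : Finset (Sym2 V)) : Finset V :=
  univ.filter fun x => (SimpleGraph.fromEdgeSet (↑S : Set (Sym2 V))).Reachable v x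

lemma mem_comp {V : Type*} [Fintype V] {v x : V} {S : Finset (Sym2 V)} :
    x ∈ comp v S ↔ (SimpleGraph.fromEdgeSet (↑S : Set (Sym2 V))).Reachable v x := by
  simp [comp]

lemma disjoint_innerEdges_compl {V : Type*} [Fintype V] [DecidableEq V] (C : Finset V) :
    Disjoint (innerEdges C) (innerEdges Cᶜ) := by
  rw [disjoint_left]
  intro e
  induction e with | _ x y =>
  simp only [mk_mem_innerEdges, mem_compl]
  tauto

/-- The complete graph on `V` has `|C| * |Cᶜ|` edges across the cut between `C` and `Cᶜ`. -/
lemma card_innerEdges_univ {V : Type*} [Fintype V] [DecidableEq V] (C : Finset V) :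
    (innerEdges (univ : Finset V)).card =
      (innerEdges C).card + (innerEdges Cᶜ).card + C.card * (Fintype.card V - C.card) := by
  rw [card_innerEdges, card_innerEdges, card_innerEdges, card_compl, card_univ]
  obtain ⟨m, hm⟩ := Nat.exists_eq_add_of_le (card_le_univ C)
  rw [hm, Nat.add_sub_cancel_left]
  qify
  simp only [Nat.cast_choose_two]
  push_cast
  ring

/-- The edge sets whose component at `v` is `C` are the unions of a connected edge set on `C`
and an arbitrary edge set on `Cᶜ`. -/
lemma comp_union {V : Type*} [Fintype V] [DecidableEq V] {C : Finset V} {v : V} (hv : v ∈ C)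
    {A B : Finset (Sym2 V)} (hA : A ⊆ innerEdges C) (hB : B ⊆ innerEdges Cᶜ) :
    comp v (A ∪ B) = C ↔
      ∀ x ∈ C, (SimpleGraph.fromEdgeSet (↑A : Set (Sym2 V))).Reachable v x := by
  have hcl : ∀ x ∈ (C : Set V), ∀ y,
      (SimpleGraph.fromEdgeSet (↑(A ∪ B) : Set (Sym2 V))).Adj x y →
      y ∈ (C : Set V) ∧ (SimpleGraph.fromEdgeSet (↑A : Set (Sym2 V))).Adj x y := by
    intro x hx y hxy
    rw [SimpleGraph.fromEdgeSet_adj, mem_coe, mem_union] at hxy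
    obtain ⟨h | h, hne⟩ := hxy
    · exact ⟨(mk_mem_innerEdges.1 (hA h)).2.1, (SimpleGraph.fromEdgeSet_adj _).2 ⟨h, hne⟩⟩
    · exact absurd hx (mem_compl.1 (mk_mem_innerEdges.1 (hB h)).1)
  constructor
  · intro h x hx
    rw [← h, mem_comp] at hx
    exact (reachable_of_closed hcl hv hx).2
  · intro h
    ext x
    rw [mem_comp]
    refine ⟨fun hx => (reachable_of_closed hcl hv hx).1, fun hx => (h x hx).mono ?_⟩
    exact SimpleGraph.fromEdgeSet_mono (by simp)

/-- No edge leaves a component. -/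
lemma inter_union_inter_of_comp {V : Type*} [Fintype V] [DecidableEq V] {C : Finset V} {v : V}
    {S : Finset (Sym2 V)} (hS : S ⊆ innerEdges univ) (h : comp v S = C) :
    S ∩ innerEdges C ∪ S ∩ innerEdges Cᶜ = S := by
  rw [← inter_union_distrib_left, inter_eq_left]
  intro e he
  induction e with | _ x y =>
  have hne := (mk_mem_innerEdges.1 (hS he)).2.2
  have hadj : (SimpleGraph.fromEdgeSet (↑S : Set (Sym2 V))).Adj x y :=
    (SimpleGraph.fromEdgeSet_adj _).2 ⟨he, hne⟩
  have hxy : x ∈ C ↔ y ∈ C := by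
    rw [← h, mem_comp, mem_comp]
    exact ⟨fun h => h.trans hadj.reachable, fun h => h.trans hadj.symm.reachable⟩
  rw [mem_union, mk_mem_innerEdges, mk_mem_innerEdges, mem_compl, mem_compl]
  tauto

open Classical in
/-- The probability that the component of `v` is `C`: the edges inside `C` connect it, the edges
across the cut are all absent, and those inside `Cᶜ` are unconstrained. -/
lemma sum_comp_eq {V : Type*} [Fintype V] [DecidableEq V] (p : ℝ) (C : Finset V) {v : V}
    (hv : v ∈ C) :
    ∑ S ∈ (innerEdges (univ : Finset V)).powerset with comp v S = C,
        p ^ S.card * (1 - p) ^ ((innerEdges (univ : Finset V)).card - S.card) =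
      (1 - p) ^ (C.card * (Fintype.card V - C.card)) *
        connProb (⊤ : SimpleGraph (Fin C.card)) p := by
  have hone : ∑ B ∈ (innerEdges Cᶜ).powerset,
      p ^ B.card * (1 - p) ^ ((innerEdges Cᶜ).card - B.card) = 1 := by
    rw [sum_pow_mul_eq_add_pow]
    simp
  -- insert the factor `1` that accounts for the free edges inside `Cᶜ`
  have hQ := mul_one (connProb (⊤ : SimpleGraph (Fin C.card)) p)
  rw [← hone] at hQ
  rw [← hQ, connProb_eq_sum_innerEdges p C hv, sum_mul_sum,
    ← sum_product', mul_sum]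
  have hdis := disjoint_innerEdges_compl C
  symm
  refine sum_bij' (fun AB _ => AB.1 ∪ AB.2)
    (fun S _ => (S ∩ innerEdges C, S ∩ innerEdges Cᶜ)) ?_ ?_ ?_ ?_ ?_
  · rintro ⟨A, B⟩ h
    simp only [mem_product, mem_filter, mem_powerset] at h ⊢
    refine ⟨union_subset (h.1.1.trans ?_) (h.2.trans ?_), (comp_union hv h.1.1 h.2).2 h.1.2⟩ <;>
    · intro e
      induction e with | _ x y =>
      simp only [mk_mem_innerEdges, mem_univ]
      tauto
  · intro S h
    simp only [mem_product, mem_filter, mem_powerset] at h ⊢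
    refine ⟨⟨inter_subset_right, ?_⟩, inter_subset_right⟩
    rw [← comp_union hv inter_subset_right (inter_subset_right (s₁ := S)),
      inter_union_inter_of_comp h.1 h.2]
    exact h.2
  · rintro ⟨A, B⟩ h
    simp only [mem_product, mem_filter, mem_powerset] at h
    rw [Prod.mk.injEq, union_inter_distrib_right, union_inter_distrib_right,
      inter_eq_left.2 h.1.1, inter_eq_left.2 h.2,
      disjoint_iff_inter_eq_empty.1 (hdis.mono_left h.1.1),
      disjoint_iff_inter_eq_empty.1 (hdis.symm.mono_left h.2)]
    simp
  · intro S h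
    simp only [mem_filter, mem_powerset] at h
    exact inter_union_inter_of_comp h.1 h.2
  · rintro ⟨A, B⟩ h
    simp only [mem_product, mem_filter, mem_powerset] at h
    have hAc := card_le_card h.1.1
    have hBc := card_le_card h.2
    have hcard := card_innerEdges_univ C
    have hAB : (A ∪ B).card = A.card + B.card :=
      card_union_of_disjoint (hdis.mono h.1.1 h.2)
    have hexp : (innerEdges (univ : Finset V)).card - (A ∪ B).card =
        C.card * (Fintype.card V - C.card) + ((innerEdges C).card - A.card) +
          ((innerEdges Cᶜ).card - B.card) := by omega
    dsimp only
    rw [hexp, hAB]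
    simp only [pow_add]
    ring

/-- The component of the vertex `0` has some size `m + 1`, and there are `N.choose m` candidate
vertex sets of that size. -/
lemma sum_choose_connProb (p : ℝ) (N : ℕ) :
    ∑ m ∈ range (N + 1), (N.choose m : ℝ) * ((1 - p) ^ ((m + 1) * (N + 1 - (m + 1))) *
      connProb (⊤ : SimpleGraph (Fin (m + 1))) p) = 1 := by
  classical
  let U : Finset (Fin (N + 1)) := univ.erase 0
  have hU : U.card = N := by simp [U]
  have h1 := sum_powerset_apply_card (fun m => (1 - p) ^ ((m + 1) * (N + 1 - (m + 1))) *
      connProb (⊤ : SimpleGraph (Fin (m + 1))) p) (x := U)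
  simp only [hU, nsmul_eq_mul] at h1
  rw [← h1]
  have h2 := sum_pow_mul_eq_add_pow p (1 - p) (innerEdges (univ : Finset (Fin (N + 1))))
  rw [add_sub_cancel, one_pow] at h2
  refine Eq.trans ?_ h2
  rw [← sum_fiberwise_of_maps_to (t := U.powerset) (g := fun S => (comp 0 S).erase 0)
    (fun S _ => mem_powerset.2 (erase_subset_erase _ (subset_univ _)))]
  refine sum_congr rfl fun D hD => ?_
  have h0 : (0 : Fin (N + 1)) ∉ D := fun h => by simpa [U] using mem_powerset.1 hD h
  have h3 := sum_comp_eq p (insert 0 D) (mem_insert_self 0 D)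
  rw [card_insert_of_notMem h0, Fintype.card_fin] at h3
  rw [← h3]
  refine sum_congr (filter_congr fun S _ => ?_) fun _ _ => rfl
  have hmem : (0 : Fin (N + 1)) ∈ comp 0 S := mem_comp.2 .rfl
  constructor
  · intro h
    rw [h, erase_insert h0]
  · intro h
    rw [← h, insert_erase hmem]

/-- Writing `Q^k = connProb (K_k) p` for the probability that the Bernoulli(`p`) random
subgraph of the complete graph on `k` vertices is connected, one has `Q^1 = 1` and, for
every `n > 1`, `Q^n = 1 - Σ_{ℓ=1}^{n-1} C(n-1, ℓ-1) (1-p)^{ℓ(n-ℓ)} Q^ℓ`. -/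
theorem connProb_complete_recursion (p : ℝ) (hp : p ∈ Set.Icc (0 : ℝ) 1) :
    connProb (⊤ : SimpleGraph (Fin 1)) p = 1 ∧
    ∀ n : ℕ, 1 < n →
      connProb (⊤ : SimpleGraph (Fin n)) p =
        1 - ∑ ℓ ∈ Finset.Icc 1 (n - 1),
          (Nat.choose (n - 1) (ℓ - 1) : ℝ) * (1 - p) ^ (ℓ * (n - ℓ)) *
            connProb (⊤ : SimpleGraph (Fin ℓ)) p := by
  have h1 := sum_choose_connProb p 0
  refine ⟨by simpa using h1, fun n hn => ?_⟩
  obtain ⟨N, rfl⟩ : ∃ N, n = N + 1 := ⟨n - 1, by omega⟩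
  have h := sum_choose_connProb p N
  rw [sum_range_succ] at h
  -- the last term, where the component is everything, is `Q^n` itself
  simp only [Nat.choose_self, Nat.cast_one, one_mul, Nat.sub_self, mul_zero, pow_zero] at h
  have hI : Finset.Icc 1 (N + 1 - 1) = Finset.Ico 1 (N + 1) := by
    ext; simp only [mem_Icc, mem_Ico]; omega
  rw [hI, sum_Ico_eq_sum_range, eq_sub_iff_add_eq, add_comm]
  refine Eq.trans ?_ h
  congr 1
  refine sum_congr rfl fun m _ => ?_
  rw [Nat.add_comm 1 m, Nat.add_sub_cancel, Nat.add_sub_cancel, mul_assoc]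
end

section
/- Let p ∈ [0,1], n ≥ 2, and let i ≠ j be two vertices of the complete graph K_n. Then the transmission probability P^n_{ij}(p) satisfies P^n_{ij}(p) = Σ_{k=2}^{n} C(n-2, k-2) (1-p)^{k(n-k)} Q^k, where Q^k is the probability that the random subgraph of K_k retaining each edge independently with probability p is connected, and C(·,·) denotes the binomial coefficient. -/
/-!
Sort the edge subsets `S` according to the vertex set `A` of the component of `i`. The component
is `A` exactly when `S` contains no edge between `A` and its complement and the edges of `S` inside
`A` form a connected graph on `A` (`reachable_iff_mem_range`). The edges inside `A`, the boundary
edges of `A` and the remaining edges are disjoint sets, so independence (`bernSum_mul`) makes the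
probability of this event `Q^k * (1 - p)^(k (n - k))` with `k = |A|` (`bernSum_component`).
Finally, `i` and `j` are joined iff `j ∈ A`, and there are `C(n-2, k-2)` sets `A` of size `k`
containing both `i` and `j` (`sum_sets_containing_pair`).
-/

open Finset

/-! ### Expectations over random subsets -/

/-- The expectation of `f S` for a random subset `S` of `E` that contains each element
independently with probability `p`. -/
noncomputable def bernSum {α : Type*} (p : ℝ) (E : Finset α) (f : Finset α → ℝ) : ℝ :=
  ∑ S ∈ E.powerset, p ^ #S * (1 - p) ^ (#E - #S) * f S

lemma bernSum_congr {α : Type*} (p : ℝ) (E : Finset α) {f g : Finset α → ℝ}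
    (h : ∀ S ⊆ E, f S = g S) : bernSum p E f = bernSum p E g :=
  Finset.sum_congr rfl fun S hS => by rw [h S (Finset.mem_powerset.1 hS)]

lemma bernSum_one {α : Type*} (p : ℝ) (E : Finset α) : bernSum p E (fun _ => 1) = 1 := by
  simp [bernSum, Finset.sum_pow_mul_eq_add_pow]

lemma bernSum_empty {α : Type*} [DecidableEq α] (p : ℝ) (E : Finset α) :
    bernSum p E (fun S => if S = ∅ then 1 else 0) = (1 - p) ^ #E := by
  simp [bernSum]

lemma bernSum_sum {α ι : Type*} (p : ℝ) (E : Finset α) (s : Finset ι)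
    (f : ι → Finset α → ℝ) :
    bernSum p E (fun S => ∑ a ∈ s, f a S) = ∑ a ∈ s, bernSum p E (f a) := by
  simp only [bernSum, Finset.mul_sum]
  exact Finset.sum_comm

/-- Independence of the restrictions of the random set to two disjoint sets. -/
lemma bernSum_mul {α : Type*} [DecidableEq α] (p : ℝ) {E F : Finset α} (h : Disjoint E F)
    (f g : Finset α → ℝ) :
    bernSum p (E ∪ F) (fun S => f (S ∩ E) * g (S ∩ F)) = bernSum p E f * bernSum p F g := by
  unfold bernSum
  rw [Finset.sum_mul_sum, ← Finset.sum_product']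
  refine Finset.sum_nbij' (fun S => (S ∩ E, S ∩ F)) (fun T => T.1 ∪ T.2) ?_ ?_ ?_ ?_ ?_
  · intro S _
    simp
  · rintro ⟨T, U⟩ hT
    simp only [Finset.mem_product, Finset.mem_powerset] at hT ⊢
    exact Finset.union_subset_union hT.1 hT.2
  · intro S hS
    rw [Finset.mem_powerset] at hS
    simp only
    rw [← Finset.inter_union_distrib_left, Finset.inter_eq_left.2 hS]
  · rintro ⟨T, U⟩ hT
    simp only [Finset.mem_product, Finset.mem_powerset] at hT
    have h1 : U ∩ E = ∅ := Finset.disjoint_iff_inter_eq_empty.1 (h.symm.mono_left hT.2)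
    have h2 : T ∩ F = ∅ := Finset.disjoint_iff_inter_eq_empty.1 (h.mono_left hT.1)
    simp [Finset.union_inter_distrib_right, h1, h2, Finset.inter_eq_left.2 hT.1,
      Finset.inter_eq_left.2 hT.2]
  · intro S hS
    rw [Finset.mem_powerset] at hS
    have hcard : #S = #(S ∩ E) + #(S ∩ F) := by
      rw [← Finset.card_union_of_disjoint
        (h.mono Finset.inter_subset_right Finset.inter_subset_right),
        ← Finset.inter_union_distrib_left, Finset.inter_eq_left.2 hS]
    have hE : #(S ∩ E) ≤ #E := Finset.card_le_card Finset.inter_subset_right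
    have hF : #(S ∩ F) ≤ #F := Finset.card_le_card Finset.inter_subset_right
    have hsub : #(E ∪ F) - #S = (#E - #(S ∩ E)) + (#F - #(S ∩ F)) := by
      rw [Finset.card_union_of_disjoint h]
      omega
    simp only
    rw [hsub, hcard, pow_add, pow_add]
    ring

lemma bernSum_map {α β : Type*} [DecidableEq β] (p : ℝ) (e : α ↪ β) (E : Finset α)
    (f : Finset β → ℝ) :
    bernSum p (E.map e) f = bernSum p E (fun S => f (S.map e)) := by
  symm
  unfold bernSum
  refine Finset.sum_bij (fun S _ => S.map e) ?_ ?_ ?_ ?_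
  · intro S hS
    simpa using hS
  · intro S _ T _ h
    exact Finset.map_injective e h
  · intro T hT
    rw [Finset.mem_powerset, Finset.subset_map_iff] at hT
    obtain ⟨S, hS, rfl⟩ := hT
    exact ⟨S, Finset.mem_powerset.2 hS, rfl⟩
  · intro S _
    simp

/-! ### Components of the random graph -/

/-- The component of `φ x` is the range of `φ` iff the graph that `φ` pulls back is connected and no
edge leaves the range. -/
lemma reachable_iff_mem_range {V W : Type*} (G : SimpleGraph V) (φ : W ↪ V) (x : W) :
    (∀ v, G.Reachable (φ x) v ↔ v ∈ Set.range φ) ↔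
      (G.comap φ).Connected ∧ ∀ a, ∀ b ∉ Set.range φ, ¬ G.Adj (φ a) b := by
  constructor
  · intro h
    constructor
    · have key : ∀ v, G.Reachable (φ x) v → ∀ y, φ y = v → (G.comap φ).Reachable x y := by
        intro v hv
        rw [SimpleGraph.reachable_iff_reflTransGen] at hv
        induction hv with
        | refl =>
          intro y hy
          rw [φ.injective hy]
        | tail hu huv ih =>
          intro y hy
          rw [← SimpleGraph.reachable_iff_reflTransGen] at hu
          obtain ⟨z, rfl⟩ := (h _).1 hu
          refine (ih z rfl).trans (SimpleGraph.Adj.reachable ?_)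
          subst hy
          exact huv
      have hx : ∀ y, (G.comap φ).Reachable x y := fun y => key _ ((h _).2 ⟨y, rfl⟩) y rfl
      have : Nonempty W := ⟨x⟩
      exact ⟨fun a b => (hx a).symm.trans (hx b)⟩
    · intro a b hb hab
      exact hb ((h b).1 (((h _).2 ⟨a, rfl⟩).trans hab.reachable))
  · rintro ⟨hc, hb⟩ v
    constructor
    · intro hv
      rw [SimpleGraph.reachable_iff_reflTransGen] at hv
      induction hv with
      | refl => exact ⟨x, rfl⟩
      | tail _ huv ih =>
        obtain ⟨z, rfl⟩ := ih
        by_contra hn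
        exact hb z _ hn huv
    · rintro ⟨y, rfl⟩
      exact (hc.preconnected x y).map (SimpleGraph.Embedding.comap φ G).toHom

lemma mem_edgeFinset'_top {V : Type*} [Fintype V] (e : Sym2 V) :
    e ∈ edgeFinset' (⊤ : SimpleGraph V) ↔ ¬ e.IsDiag := by
  simp [edgeFinset']

/-- The edges of the complete graph joining `A` to its complement. -/
def boundaryEdges {V : Type*} [Fintype V] [DecidableEq V] (A : Finset V) : Finset (Sym2 V) :=
  (A ×ˢ Aᶜ).image fun q => s(q.1, q.2)

lemma mem_boundaryEdges {V : Type*} [Fintype V] [DecidableEq V] (A : Finset V) (e : Sym2 V) :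
    e ∈ boundaryEdges A ↔ ∃ a ∈ A, ∃ b ∉ A, s(a, b) = e := by
  simp [boundaryEdges, and_assoc]

lemma card_boundaryEdges {V : Type*} [Fintype V] [DecidableEq V] (A : Finset V) :
    #(boundaryEdges A) = #A * (Fintype.card V - #A) := by
  rw [boundaryEdges, Finset.card_image_of_injOn, Finset.card_product, Finset.card_compl]
  rintro ⟨a, b⟩ h ⟨c, d⟩ h' hq
  simp only [Finset.coe_product, Set.mem_prod, Finset.mem_coe, Finset.mem_compl] at h h'
  rcases Sym2.eq_iff.1 hq with ⟨rfl, rfl⟩ | ⟨rfl, rfl⟩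
  · rfl
  · exact absurd h.1 h'.2

open Classical in
/-- The probability that the component of `φ x` in the random graph is the image of `φ`. -/
lemma bernSum_component {V W : Type*} [Fintype V] [Fintype W] (p : ℝ) (φ : W ↪ V) (x : W) :
    bernSum p (edgeFinset' (⊤ : SimpleGraph V)) (fun S =>
      if ∀ v, (SimpleGraph.fromEdgeSet (S : Set (Sym2 V))).Reachable (φ x) v ↔ v ∈ Set.range φ
      then 1 else 0) =
    (1 - p) ^ (Fintype.card W * (Fintype.card V - Fintype.card W)) *
      connProb (⊤ : SimpleGraph W) p := by
  set E := edgeFinset' (⊤ : SimpleGraph V) with hE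
  set I := (edgeFinset' (⊤ : SimpleGraph W)).map φ.sym2Map with hI
  set C := boundaryEdges (Finset.univ.map φ) with hC
  have hIE : I ⊆ E := by
    intro e he
    rw [hI, Finset.mem_map] at he
    obtain ⟨e', he', rfl⟩ := he
    rw [mem_edgeFinset'_top] at he'
    rw [hE, mem_edgeFinset'_top]
    induction e' with
    | _ a b => simpa using he'
  have hCE : C ⊆ E := by
    intro e he
    rw [hC, mem_boundaryEdges] at he
    obtain ⟨a, ha, b, hb, rfl⟩ := he
    rw [hE, mem_edgeFinset'_top]
    rintro (rfl : a = b)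
    exact hb ha
  have hIC : Disjoint I C := by
    rw [Finset.disjoint_left]
    intro e he he'
    rw [hI, Finset.mem_map] at he
    obtain ⟨e', _, rfl⟩ := he
    rw [hC, mem_boundaryEdges] at he'
    obtain ⟨a, ha, b, hb, h⟩ := he'
    induction e' with
    | _ c d =>
      have hcd : b = φ c ∨ b = φ d := by
        rcases Sym2.eq_iff.1 (show s(a, b) = s(φ c, φ d) from h) with h | h
        · exact Or.inr h.2
        · exact Or.inl h.2
      rcases hcd with rfl | rfl <;> simp at hb
  have hU : I ∪ C ⊆ E := Finset.union_subset hIE hCE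
  -- The event depends on `S ∩ I` and `S ∩ C` only; `g` is the part concerning `S ∩ I`.
  set g : Finset (Sym2 V) → ℝ := fun T =>
    if ((SimpleGraph.fromEdgeSet (T : Set (Sym2 V))).comap φ).Connected then 1 else 0 with hg
  have hf : ∀ S ⊆ E,
      (if ∀ v, (SimpleGraph.fromEdgeSet (S : Set (Sym2 V))).Reachable (φ x) v ↔ v ∈ Set.range φ
        then (1 : ℝ) else 0) =
      (g (S ∩ (I ∪ C) ∩ I) * (if S ∩ (I ∪ C) ∩ C = ∅ then 1 else 0)) * 1 := by
    intro S hS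
    have e1 : S ∩ (I ∪ C) ∩ I = S ∩ I := by
      rw [Finset.inter_assoc, Finset.union_inter_cancel_left]
    have e2 : S ∩ (I ∪ C) ∩ C = S ∩ C := by
      rw [Finset.inter_assoc, Finset.union_inter_cancel_right]
    have e3 : (SimpleGraph.fromEdgeSet ((S ∩ I : Finset (Sym2 V)) : Set (Sym2 V))).comap φ =
        (SimpleGraph.fromEdgeSet (S : Set (Sym2 V))).comap φ := by
      ext a b
      have : a ≠ b → s(φ a, φ b) ∈ I := by
        intro hab
        rw [hI, Finset.mem_map]
        exact ⟨s(a, b), by simpa [mem_edgeFinset'_top] using hab, rfl⟩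
      simp only [SimpleGraph.comap_adj, SimpleGraph.fromEdgeSet_adj, Finset.mem_coe,
        Finset.mem_inter, ne_eq, φ.injective.eq_iff]
      tauto
    have e4 : (∀ a, ∀ b ∉ Set.range φ,
        ¬ (SimpleGraph.fromEdgeSet (S : Set (Sym2 V))).Adj (φ a) b) ↔ S ∩ C = ∅ := by
      rw [← Finset.disjoint_iff_inter_eq_empty, Finset.disjoint_left]
      constructor
      · intro h e he heC
        rw [hC, mem_boundaryEdges] at heC
        obtain ⟨a, ha, b, hb, rfl⟩ := heC
        obtain ⟨c, -, rfl⟩ := Finset.mem_map.1 ha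
        refine h c b (by simpa using hb) ?_
        rw [SimpleGraph.fromEdgeSet_adj]
        exact ⟨he, fun h => hb (h ▸ ha)⟩
      · intro h a b hb hab
        rw [SimpleGraph.fromEdgeSet_adj] at hab
        refine h hab.1 ?_
        rw [hC, mem_boundaryEdges]
        exact ⟨φ a, by simp, b, by simpa using hb, rfl⟩
    rw [e1, e2, hg]
    simp only [e3, reachable_iff_mem_range, e4, mul_one]
    split_ifs <;> simp_all
  rw [bernSum_congr p E hf]
  have hsplit : E = (I ∪ C) ∪ (E \ (I ∪ C)) := (Finset.union_sdiff_of_subset hU).symm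
  rw [hsplit, bernSum_mul p Finset.disjoint_sdiff
    (fun T => g (T ∩ I) * (if T ∩ C = ∅ then 1 else 0)) (fun _ => 1), bernSum_one,
    bernSum_mul p hIC g (fun T => if T = ∅ then 1 else 0), bernSum_empty, hC,
    card_boundaryEdges, Finset.card_map, Finset.card_univ, mul_one, mul_comm]
  congr 1
  rw [hI, bernSum_map]
  unfold connProb
  refine Finset.sum_congr rfl fun S _ => ?_
  have : (SimpleGraph.fromEdgeSet ((S.map φ.sym2Map : Finset (Sym2 V)) : Set (Sym2 V))).comap φ =
      SimpleGraph.fromEdgeSet (S : Set (Sym2 W)) := by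
    ext a b
    have : s(φ a, φ b) = φ.sym2Map s(a, b) := rfl
    simp only [SimpleGraph.comap_adj, SimpleGraph.fromEdgeSet_adj, Finset.mem_coe, this,
      Finset.mem_map', ne_eq, φ.injective.eq_iff]
  rw [hg]
  simp only [this]

/-! ### Counting vertex sets and the formula -/

/-- A set containing `i` and `j` is `{i, j}` together with an arbitrary set of other points. -/
lemma sum_sets_containing_pair (n : ℕ) (hn : 2 ≤ n) (i j : Fin n) (hij : i ≠ j) (h : ℕ → ℝ) :
    ∑ A : Finset (Fin n) with i ∈ A ∧ j ∈ A, h #A =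
      ∑ k ∈ Finset.Icc 2 n, (Nat.choose (n - 2) (k - 2) : ℝ) * h k := by
  have hc : #(({i, j} : Finset (Fin n))ᶜ) = n - 2 := by
    rw [Finset.card_compl, Finset.card_pair hij, Fintype.card_fin]
  have h1 : ∑ A : Finset (Fin n) with i ∈ A ∧ j ∈ A, h #A =
      ∑ B ∈ (({i, j} : Finset (Fin n))ᶜ).powerset, h (#B + 2) := by
    symm
    refine Finset.sum_nbij' (fun B => B ∪ {i, j}) (fun A => A \ {i, j}) ?_ ?_ ?_ ?_ ?_
    · intro B _
      simp
    · intro A _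
      rw [Finset.mem_powerset]
      intro v hv
      simp_all
    · intro B hB
      rw [Finset.mem_powerset, Finset.subset_compl_iff_disjoint_right] at hB
      exact Finset.union_sdiff_cancel_right hB
    · intro A hA
      simp only [Finset.mem_filter, Finset.mem_univ, true_and] at hA
      refine Finset.sdiff_union_of_subset ?_
      intro v hv
      rcases Finset.mem_insert.1 hv with rfl | hv
      · exact hA.1
      · rw [Finset.mem_singleton.1 hv]
        exact hA.2
    · intro B hB
      rw [Finset.mem_powerset, Finset.subset_compl_iff_disjoint_right] at hB
      rw [Finset.card_union_of_disjoint hB, Finset.card_pair hij]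
  rw [h1, Finset.sum_powerset_apply_card (fun m => h (m + 2)), hc]
  have h2 : Finset.Icc 2 n = (Finset.range (n - 2 + 1)).map (addRightEmbedding 2) := by
    ext k
    simp only [Finset.mem_Icc, Finset.mem_map, Finset.mem_range, addRightEmbedding_apply]
    constructor
    · intro hk
      exact ⟨k - 2, by omega, by omega⟩
    · rintro ⟨m, hm, rfl⟩
      omega
  rw [h2, Finset.sum_map]
  simp

/-- For the complete graph `K_n` with `n ≥ 2`, `p ∈ [0,1]` and distinct vertices `i ≠ j`,
the transmission probability satisfies
`P^n_{ij}(p) = Σ_{k=2}^{n} C(n-2, k-2) (1-p)^{k(n-k)} Q^k`,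
where `Q^k` is the probability that the Bernoulli(`p`) random subgraph of `K_k` is
connected. -/
theorem transmissionProb_complete_formula (n : ℕ) (hn : 2 ≤ n)
    (p : ℝ) (hp : p ∈ Set.Icc (0 : ℝ) 1) (i j : Fin n) (hij : i ≠ j) :
    transmissionProb (⊤ : SimpleGraph (Fin n)) p i j =
      ∑ k ∈ Finset.Icc 2 n,
        (Nat.choose (n - 2) (k - 2) : ℝ) * (1 - p) ^ (k * (n - k)) *
          connProb (⊤ : SimpleGraph (Fin k)) p := by
  classical
  have hcomp : ∀ A : Finset (Fin n), i ∈ A →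
      bernSum p (edgeFinset' (⊤ : SimpleGraph (Fin n))) (fun S =>
        if ∀ v, (SimpleGraph.fromEdgeSet (S : Set (Sym2 (Fin n)))).Reachable i v ↔ v ∈ A
        then 1 else 0) =
      (1 - p) ^ (#A * (n - #A)) * connProb (⊤ : SimpleGraph (Fin #A)) p := by
    intro A hi
    have hr : Set.range (A.orderEmbOfFin rfl).toEmbedding = (A : Set (Fin n)) :=
      A.range_orderEmbOfFin rfl
    obtain ⟨x, hx⟩ : i ∈ Set.range (A.orderEmbOfFin rfl).toEmbedding := by
      rw [hr]
      exact hi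
    have := bernSum_component p (A.orderEmbOfFin rfl).toEmbedding x
    simpa only [hr, hx, Finset.mem_coe, Fintype.card_fin] using this
  -- Only the vertex set of the component of `i` contributes to the sum.
  have hind : ∀ G : SimpleGraph (Fin n), (if G.Reachable i j then (1 : ℝ) else 0) =
      ∑ A : Finset (Fin n) with i ∈ A ∧ j ∈ A,
        if ∀ v, G.Reachable i v ↔ v ∈ A then 1 else 0 := by
    intro G
    have hA : ∀ A : Finset (Fin n), (∀ v, G.Reachable i v ↔ v ∈ A) ↔
        Finset.univ.filter (G.Reachable i) = A := by
      intro A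
      simp [Finset.ext_iff]
    simp only [hA, Finset.sum_ite_eq]
    simp
  have hsum : transmissionProb (⊤ : SimpleGraph (Fin n)) p i j =
      bernSum p (edgeFinset' (⊤ : SimpleGraph (Fin n))) (fun S =>
        ∑ A : Finset (Fin n) with i ∈ A ∧ j ∈ A,
        if ∀ v, (SimpleGraph.fromEdgeSet (S : Set (Sym2 (Fin n)))).Reachable i v ↔ v ∈ A
        then 1 else 0) := by
    unfold transmissionProb bernSum
    refine Finset.sum_congr rfl fun S _ => ?_
    congr 1
    convert hind (SimpleGraph.fromEdgeSet (S : Set (Sym2 (Fin n))))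
  rw [hsum, bernSum_sum, Finset.sum_congr rfl fun A hA => hcomp A (Finset.mem_filter.1 hA).2.1,
    sum_sets_containing_pair n hn i j hij
      (fun k => (1 - p) ^ (k * (n - k)) * connProb (⊤ : SimpleGraph (Fin k)) p)]
  exact Finset.sum_congr rfl fun k _ => (mul_assoc _ _ _).symm
end

section
/- Let p ∈ [0,1], n ≥ 2, and let i ≠ j be two vertices of the complete graph K_n. Then the transmission probability P^n_{ij}(p) satisfies 1 - (1-p)(1-p²)^{n-2} ≤ P^n_{ij}(p) ≤ 1 - (1-p)^{n-1}. -/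
/-!
Both bounds compare the event that `i` and `j` are joined with the event that some block `T k` of
edges is entirely retained, where
the blocks `T k` are pairwise disjoint. For such a family the events `T k ⊆ S` are independent, so
the probability that no block is entirely retained is `∏ k, (1 - p ^ #(T k))`
(`edgeExpect_prod_one_sub`).

* Upper bound: if `i` is joined to `j ≠ i`, then some edge `s(i, k)` is retained; the blocks are
  the `n - 1` singletons `{s(i, k)}`.
* Lower bound: `i` and `j` are joined as soon as `s(i, j)` is retained, or both `s(i, k)` and
  `s(k, j)` are for some third vertex `k`; the blocks are `{s(i, j)}` and the `n - 2` pairs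
  `{s(i, k), s(k, j)}`.
-/

open Finset

section EdgeExpect

variable {α : Type*}

/-- The expectation of `F S`, where `S` is the random subset of `E` which retains each element
independently with probability `p`. -/
noncomputable def edgeExpect (p : ℝ) (E : Finset α) (F : Finset α → ℝ) : ℝ :=
  ∑ S ∈ E.powerset, p ^ S.card * (1 - p) ^ (E.card - S.card) * F S

lemma edgeExpect_one (p : ℝ) (E : Finset α) : edgeExpect p E (fun _ => 1) = 1 := by
  simp only [edgeExpect, mul_one]
  rw [Finset.sum_pow_mul_eq_add_pow]
  simp

lemma edgeExpect_sub (p : ℝ) (E : Finset α) (F G : Finset α → ℝ) :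
    edgeExpect p E (fun S => F S - G S) = edgeExpect p E F - edgeExpect p E G := by
  simp only [edgeExpect, mul_sub, Finset.sum_sub_distrib]

lemma edgeExpect_one_sub (p : ℝ) (E : Finset α) (F : Finset α → ℝ) :
    edgeExpect p E (fun S => 1 - F S) = 1 - edgeExpect p E F := by
  rw [edgeExpect_sub p E (fun _ => 1) F, edgeExpect_one]

lemma edgeExpect_mono {p : ℝ} (hp : p ∈ Set.Icc (0 : ℝ) 1) (E : Finset α)
    {F G : Finset α → ℝ} (h : ∀ S ⊆ E, F S ≤ G S) : edgeExpect p E F ≤ edgeExpect p E G := by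
  refine Finset.sum_le_sum fun S hS => ?_
  have h0 := hp.1
  have h1 : 0 ≤ 1 - p := sub_nonneg.2 hp.2
  exact mul_le_mul_of_nonneg_left (h S (Finset.mem_powerset.1 hS)) (by positivity)

variable [DecidableEq α]

/-- Conditioning on whether the element `e` is retained. -/
lemma edgeExpect_insert (p : ℝ) {E : Finset α} {e : α} (he : e ∉ E) (F : Finset α → ℝ) :
    edgeExpect p (insert e E) F =
      (1 - p) * edgeExpect p E F + p * edgeExpect p E (fun S => F (insert e S)) := by
  unfold edgeExpect
  rw [Finset.sum_powerset_insert he, Finset.mul_sum, Finset.mul_sum]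
  congr 1 <;> refine Finset.sum_congr rfl fun S hS => ?_
  · have hS' := Finset.card_le_card (Finset.mem_powerset.1 hS)
    rw [Finset.card_insert_of_notMem he, Nat.sub_add_comm hS', pow_succ]
    ring
  · have heS : e ∉ S := fun h => he (Finset.mem_powerset.1 hS h)
    rw [Finset.card_insert_of_notMem he, Finset.card_insert_of_notMem heS,
      Nat.add_sub_add_right, pow_succ]
    ring

/-- The event `e ∈ S` is independent of any quantity that ignores `e`. -/
lemma edgeExpect_mem_mul (p : ℝ) {E : Finset α} {e : α} (he : e ∈ E) {G : Finset α → ℝ}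
    (hG : ∀ S, G (insert e S) = G S) :
    edgeExpect p E (fun S => (if e ∈ S then 1 else 0) * G S) = p * edgeExpect p E G := by
  obtain ⟨E, hmem, rfl⟩ : ∃ E', e ∉ E' ∧ E = insert e E' :=
    ⟨E.erase e, Finset.notMem_erase e E, (Finset.insert_erase he).symm⟩
  rw [edgeExpect_insert p hmem, edgeExpect_insert p hmem]
  have h0 : edgeExpect p E (fun S => (if e ∈ S then 1 else 0) * G S) = 0 := by
    refine Finset.sum_eq_zero fun S hS => ?_
    have heS : e ∉ S := fun h => hmem (Finset.mem_powerset.1 hS h)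
    simp [heS]
  simp only [h0, hG, Finset.mem_insert_self, if_true, one_mul]
  ring

/-- The event `T ⊆ S` is independent of any quantity that ignores the elements of `T`. -/
lemma edgeExpect_subset_mul (p : ℝ) {E T : Finset α} (hT : T ⊆ E) {G : Finset α → ℝ}
    (hG : ∀ e ∈ T, ∀ S, G (insert e S) = G S) :
    edgeExpect p E (fun S => (if T ⊆ S then 1 else 0) * G S) =
      p ^ T.card * edgeExpect p E G := by
  induction T using Finset.induction_on with
  | empty => simp
  | insert e T he ih =>
    have ih := ih (fun x hx => hT (Finset.mem_insert_of_mem hx))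
      (fun x hx => hG x (Finset.mem_insert_of_mem hx))
    have key := edgeExpect_mem_mul p (hT (Finset.mem_insert_self e T))
      (G := fun S => (if T ⊆ S then 1 else 0) * G S) (fun S => by
        simp only [Finset.subset_insert_iff_of_notMem he, hG e (Finset.mem_insert_self e T)])
    rw [ih] at key
    rw [Finset.card_insert_of_notMem he, pow_succ', mul_assoc, ← key]
    congr 1
    funext S
    by_cases h1 : e ∈ S <;> by_cases h2 : T ⊆ S <;> simp [Finset.insert_subset_iff, h1, h2]

/-- The probability that none of the pairwise disjoint blocks `T k` is entirely retained. -/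
lemma edgeExpect_prod_one_sub {ι : Type*} (p : ℝ) {E : Finset α} (T : ι → Finset α)
    (K : Finset ι) (hE : ∀ k ∈ K, T k ⊆ E)
    (hd : (K : Set ι).PairwiseDisjoint T) :
    edgeExpect p E (fun S => ∏ k ∈ K, (1 - if T k ⊆ S then 1 else 0)) =
      ∏ k ∈ K, (1 - p ^ (T k).card) := by
  classical
  induction K using Finset.induction_on with
  | empty => simpa using edgeExpect_one p E
  | insert k K hk ih =>
    have ih := ih (fun x hx => hE x (Finset.mem_insert_of_mem hx))
      (hd.subset (by simp))
    have hind := edgeExpect_subset_mul p (hE k (Finset.mem_insert_self k K))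
      (G := fun S => ∏ k ∈ K, (1 - if T k ⊆ S then (1 : ℝ) else 0)) (fun e he S => by
        refine Finset.prod_congr rfl fun l hl => ?_
        have hkl : k ≠ l := fun h => hk (h ▸ hl)
        have hdis : Disjoint (T k) (T l) := hd (by simp) (by simp [hl]) hkl
        simp only [Finset.subset_insert_iff_of_notMem (Finset.disjoint_left.1 hdis he)])
    simp only [Finset.prod_insert hk, sub_mul, one_mul]
    rw [edgeExpect_sub, hind, ih]

end EdgeExpect

/-- The product in `edgeExpect_prod_one_sub` is the indicator that no block lies in `S`. -/
lemma prod_one_sub_eq_ite {α ι : Type*} [DecidableEq α] (T : ι → Finset α) (K : Finset ι)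
    (S : Finset α) [Decidable (∃ k ∈ K, T k ⊆ S)] :
    ∏ k ∈ K, (1 - if T k ⊆ S then (1 : ℝ) else 0) = if ∃ k ∈ K, T k ⊆ S then 0 else 1 := by
  split_ifs with h
  · obtain ⟨k, hk, hS⟩ := h
    exact Finset.prod_eq_zero hk (by simp [hS])
  · push Not at h
    exact Finset.prod_eq_one fun k hk => by simp [h k hk]

lemma mem_edgeFinset'_top_s8 {n : ℕ} {a b : Fin n} (h : a ≠ b) :
    s(a, b) ∈ edgeFinset' (⊤ : SimpleGraph (Fin n)) := by
  simp [edgeFinset', h]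

/-- For the complete graph `K_n` with `n ≥ 2`, `p ∈ [0,1]` and distinct vertices `i ≠ j`,
the transmission probability satisfies
`1 - (1-p)(1-p²)^{n-2} ≤ P^n_{ij}(p) ≤ 1 - (1-p)^{n-1}`. -/
theorem transmissionProb_complete_bounds (n : ℕ) (hn : 2 ≤ n)
    (p : ℝ) (hp : p ∈ Set.Icc (0 : ℝ) 1) (i j : Fin n) (hij : i ≠ j) :
    1 - (1 - p) * (1 - p ^ 2) ^ (n - 2) ≤ transmissionProb (⊤ : SimpleGraph (Fin n)) p i j ∧
    transmissionProb (⊤ : SimpleGraph (Fin n)) p i j ≤ 1 - (1 - p) ^ (n - 1) := by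
  classical
  set E := edgeFinset' (⊤ : SimpleGraph (Fin n)) with hE
  have hP : transmissionProb (⊤ : SimpleGraph (Fin n)) p i j = edgeExpect p E (fun S =>
      if (SimpleGraph.fromEdgeSet (↑S : Set (Sym2 (Fin n)))).Reachable i j then 1 else 0) := by
    unfold transmissionProb edgeExpect
    refine Finset.sum_congr rfl fun S _ => ?_
    congr
  rw [hP]
  constructor
  · set T : Fin n → Finset (Sym2 (Fin n)) := fun k =>
      if k = j then {s(i, j)} else {s(i, k), s(k, j)} with hT
    have hcard : ∏ k ∈ univ.erase i, (1 - p ^ (T k).card) = (1 - p) * (1 - p ^ 2) ^ (n - 2) := by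
      have hj : j ∈ univ.erase i := by simp [hij.symm]
      rw [← Finset.mul_prod_erase _ _ hj]
      have h2 : ∀ k ∈ (univ.erase i).erase j, (1 - p ^ (T k).card) = 1 - p ^ 2 := by
        intro k hk
        simp only [Finset.mem_erase, Finset.mem_univ, and_true] at hk
        have hne : s(i, k) ≠ s(k, j) := by
          simp only [ne_eq, Sym2.eq_iff]
          tauto
        simp [hT, hk.1, Finset.card_pair hne]
      rw [Finset.prod_congr rfl h2, Finset.prod_const, Finset.card_erase_of_mem hj,
        Finset.card_erase_of_mem (Finset.mem_univ i), Finset.card_univ, Fintype.card_fin,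
        Nat.sub_sub]
      simp [hT]
    have hexp := edgeExpect_prod_one_sub p (E := E) T (univ.erase i)
      (by
        intro k hk
        have hki : i ≠ k := (Finset.ne_of_mem_erase hk).symm
        by_cases hkj : k = j
        · simpa [hT, hkj] using mem_edgeFinset'_top_s8 hij
        · simp only [hT, hkj, if_false, Finset.insert_subset_iff, Finset.singleton_subset_iff]
          exact ⟨mem_edgeFinset'_top_s8 hki, mem_edgeFinset'_top_s8 hkj⟩)
      (by
        intro k hk l hl hkl
        simp only [Finset.coe_erase, Finset.coe_univ, Set.mem_sdiff, Set.mem_univ, true_and,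
          Set.mem_singleton_iff] at hk hl
        -- The vertex `k` is recovered from an edge of `T k` as its endpoint outside `{i, j}`,
        -- or as `j` if there is none.
        simp only [Function.onFun, Finset.disjoint_left, hT]
        intro e h1 h2
        split_ifs at h1 h2 <;>
          simp only [Finset.mem_insert, Finset.mem_singleton] at h1 h2 <;> grind)
    rw [← hcard, ← hexp, ← edgeExpect_one_sub]
    refine edgeExpect_mono hp E fun S _ => ?_
    rw [prod_one_sub_eq_ite]
    by_cases hex : ∃ k ∈ univ.erase i, T k ⊆ S
    · have hr : (SimpleGraph.fromEdgeSet (↑S : Set (Sym2 (Fin n)))).Reachable i j := by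
        obtain ⟨k, hk, hS⟩ := hex
        have hki : i ≠ k := (Finset.ne_of_mem_erase hk).symm
        by_cases hkj : k = j
        · simp only [hT, hkj, if_true, Finset.singleton_subset_iff] at hS
          exact SimpleGraph.Adj.reachable (by simp [hS, hij])
        · simp only [hT, hkj, if_false, Finset.insert_subset_iff,
            Finset.singleton_subset_iff] at hS
          exact (SimpleGraph.Adj.reachable (v := k) (by simp [hS.1, hki])).trans
            (SimpleGraph.Adj.reachable (by simp [hS.2, hkj]))
      simp only [hex, hr, if_true]
      norm_num
    · simp only [hex, if_false]
      split_ifs <;> norm_num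
  · set T : Fin n → Finset (Sym2 (Fin n)) := fun k => {s(i, k)} with hT
    have hexp := edgeExpect_prod_one_sub p (E := E) T (univ.erase i)
      (by
        intro k hk
        simpa [hT] using mem_edgeFinset'_top_s8 (Finset.ne_of_mem_erase hk).symm)
      (by
        intro k _ l _ hkl
        simp only [Function.onFun, hT, Finset.disjoint_singleton, ne_eq, Sym2.congr_right]
        exact hkl)
    simp only [hT, Finset.card_singleton, pow_one, Finset.prod_const,
      Finset.card_erase_of_mem (Finset.mem_univ i), Finset.card_univ, Fintype.card_fin] at hexp
    rw [← hexp, ← edgeExpect_one_sub]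
    refine edgeExpect_mono hp E fun S _ => ?_
    rw [prod_one_sub_eq_ite (fun k => {s(i, k)})]
    by_cases hr : (SimpleGraph.fromEdgeSet (↑S : Set (Sym2 (Fin n)))).Reachable i j
    · have hex : ∃ k ∈ univ.erase i, ({s(i, k)} : Finset (Sym2 (Fin n))) ⊆ S := by
        obtain ⟨w⟩ := hr
        cases w with
        | nil => exact absurd rfl hij
        | @cons _ k _ hadj _ =>
          rw [SimpleGraph.fromEdgeSet_adj] at hadj
          exact ⟨k, by simp [hadj.2.symm], by simpa using hadj.1⟩
      simp only [hex, hr, if_true]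
      norm_num
    · simp only [hr, if_false]
      split_ifs <;> norm_num
end

section
/- Consider n ≥ 1 agents, a real α ≥ 1, and a real n×n matrix P with P_{ii} = 1 and 0 ≤ P_{ij} ≤ 1 for all i, j, and define for q ∈ [0,1]^n the payoff of agent i under a uniform random attack as Π_i(q) = 1 - (1/n) Σ_{j=1}^n (1-q_j) P_{ij} - (α/2) q_i². Then the vector q^{N,R} with q^{N,R}_i = 1/(αn) for all i is a pure strategy Nash equilibrium, and it is the unique one: a vector q ∈ [0,1]^n satisfies Π_i(q) ≥ Π_i(q'_i, q_{-i}) for every agent i and every q'_i ∈ [0,1] if and only if q = q^{N,R}. -/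
/-!
Since `P i i = 1`, the payoff of agent `i` depends on `q i` only through
`(1/n) q_i - (α/2) q_i²`. Completing the square around `c = 1/(αn)` shows that replacing `q i`
by `x` changes the payoff by `(α/2) ((q_i - c)² - (x - c)²)` (`payoffRandom_update_sub`), whatever
the other agents do. Hence `c`, which lies in `[0,1]`, is the strictly dominant strategy.
-/

open Finset

/-- Payoff of agent `i` under a uniform random attack:
`Π_i(q) = 1 - (1/n) Σ_j (1-q_j) P_{ij} - (α/2) q_i²`. -/
noncomputable def payoffRandom (n : ℕ) (α : ℝ) (P : Fin n → Fin n → ℝ)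
    (q : Fin n → ℝ) (i : Fin n) : ℝ :=
  1 - (1 / (n : ℝ)) * ∑ j, (1 - q j) * P i j - (α / 2) * (q i) ^ 2

theorem payoffRandom_update_sub (n : ℕ) (hn : 1 ≤ n) (α : ℝ) (hα : 1 ≤ α)
    (P : Fin n → Fin n → ℝ) (hPdiag : ∀ i, P i i = 1) (q : Fin n → ℝ) (i : Fin n) (x : ℝ) :
    payoffRandom n α P (Function.update q i x) i - payoffRandom n α P q i =
      (α / 2) * ((q i - 1 / (α * n)) ^ 2 - (x - 1 / (α * n)) ^ 2) := by
  have hn0 : (n : ℝ) ≠ 0 := by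
    have : n ≠ 0 := by omega
    exact_mod_cast this
  have hα0 : α ≠ 0 := by linarith
  have hsum : ∑ j, (1 - Function.update q i x j) * P i j
      = ∑ j, (1 - q j) * P i j + (q i - x) := by
    rw [← sub_eq_iff_eq_add', ← Finset.sum_sub_distrib, Finset.sum_eq_single i]
    · rw [Function.update_self, hPdiag]; ring
    · intro j _ hj
      rw [Function.update_of_ne hj]; ring
    · simp
  unfold payoffRandom
  rw [hsum, Function.update_self]
  field_simp
  ring

/-- In the security game facing a uniform random attack (with `n ≥ 1` agents, cost
parameter `α ≥ 1` and transmission matrix `P` with unit diagonal and entries in `[0,1]`),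
a vector `q ∈ [0,1]^n` is a pure strategy Nash equilibrium if and only if
`q_i = 1/(αn)` for all `i`; in particular that constant vector is the unique pure
strategy Nash equilibrium. -/
theorem nash_equilibrium_random_attack (n : ℕ) (hn : 1 ≤ n) (α : ℝ) (hα : 1 ≤ α)
    (P : Fin n → Fin n → ℝ) (hPdiag : ∀ i, P i i = 1)
    (hP : ∀ i j, 0 ≤ P i j ∧ P i j ≤ 1)
    (q : Fin n → ℝ) (hq : ∀ i, q i ∈ Set.Icc (0 : ℝ) 1) :
    (∀ i : Fin n, ∀ q' ∈ Set.Icc (0 : ℝ) 1,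
        payoffRandom n α P (Function.update q i q') i ≤ payoffRandom n α P q i) ↔
      q = fun _ => 1 / (α * n) := by
  have hn1 : (1 : ℝ) ≤ n := by exact_mod_cast hn
  have hα2 : 0 < α / 2 := by linarith
  have hc : 1 / (α * n) ∈ Set.Icc (0 : ℝ) 1 := by
    have h1 : 1 ≤ α * n := by nlinarith
    exact ⟨by positivity, by rw [div_le_one (by linarith)]; exact h1⟩
  constructor
  · intro h
    funext i
    -- Deviating to the maximizer `1 / (α * n)` gains `(α/2) (q_i - 1/(αn))²`.
    have h1 := h i _ hc
    have h2 := payoffRandom_update_sub n hn α hα P hPdiag q i (1 / (α * n))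
    have h3 : (q i - 1 / (α * n)) ^ 2 ≤ 0 := by
      by_contra! hpos
      have := mul_pos hα2 hpos
      rw [sub_self] at h2
      linarith
    have h4 : (q i - 1 / (α * n)) ^ 2 = 0 := le_antisymm h3 (sq_nonneg _)
    exact sub_eq_zero.mp (pow_eq_zero_iff two_ne_zero |>.mp h4)
  · rintro rfl i x _
    have h2 := payoffRandom_update_sub n hn α hα P hPdiag (fun _ => 1 / (α * n)) i x
    have := mul_nonneg hα2.le (sq_nonneg (x - 1 / (α * n)))
    rw [sub_self] at h2
    linarith
end

section
/- Let n ≥ 1, ω > 0, q ∈ [0,1]^n, and let D_1,…,D_n be strictly positive reals. Let λ* be the unique real with ω = Σ_{i=1}^n max{0, (1-q_i)D_i + λ*}, and define a* ∈ ℝ^n by a*_i = (1/ω) max{0, (1-q_i)D_i + λ*}. Then a* lies in the simplex Δ = {a ∈ ℝ^n : a_i ≥ 0 for all i, Σ_i a_i = 1} and is the unique maximizer over Δ of the attacker's objective A(a) = Σ_{i=1}^n ( a_i (1-q_i) D_i - (ω/2) a_i² ): A(a) < A(a*) for every a ∈ Δ with a ≠ a*. -/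
open Finset

/-- The attacker's objective `A(a) = Σ_i ( a_i (1-q_i) D_i - (ω/2) a_i² )`. -/
noncomputable def attackerObjective (n : ℕ) (ω : ℝ) (q D : Fin n → ℝ)
    (a : Fin n → ℝ) : ℝ :=
  ∑ i, (a i * (1 - q i) * D i - (ω / 2) * (a i) ^ 2)

/-!
The number `lam` is the Lagrange multiplier of the constraint `Σ a_i = 1`, and `astar` satisfies the
KKT conditions. Since the objective is separable and quadratic, they give coordinatewise the
inequality `attacker_coord_le`: the Lagrangian term at `x ≥ 0` falls short of its value at
`astar i` by at least `(ω / 2) * (x - astar i) ^ 2`. On summation the multiplier terms cancel, as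
both vectors sum to `1`, so `A(a) + (ω / 2) * Σ (a_i - astar_i) ^ 2 ≤ A(astar)`; the quadratic sum
is positive when `a ≠ astar`.
-/

/-- Quadratic growth of the one-coordinate Lagrangian `x ↦ x * c - (ω / 2) * x ^ 2 + l * x` on
`x ≥ 0` around its maximizer `s = max 0 (c + l) / ω`. -/
theorem attacker_coord_le {ω c l s x : ℝ} (hω : 0 < ω) (hs : ω * s = max 0 (c + l)) (hx : 0 ≤ x) :
    x * c - (ω / 2) * x ^ 2 + l * x + (ω / 2) * (x - s) ^ 2
      ≤ s * c - (ω / 2) * s ^ 2 + l * s := by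
  have h1 : x * (c + l) ≤ x * (ω * s) :=
    mul_le_mul_of_nonneg_left (hs ▸ le_max_right 0 (c + l)) hx
  -- complementary slackness: `s = 0` unless `c + l = ω * s`
  have h2 : s * (c + l) = s * (ω * s) := by
    rcases le_total (c + l) 0 with h | h
    · rw [max_eq_left h] at hs
      rcases mul_eq_zero.mp hs with h0 | h0
      · exact absurd h0 hω.ne'
      · simp [h0]
    · rw [hs, max_eq_right h]
  nlinarith

/-- Let `λ*` satisfy `ω = Σ_i max{0, (1-q_i)D_i + λ*}` and define
`a*_i = (1/ω) max{0, (1-q_i)D_i + λ*}`. Then `a*` lies in the simplex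
`Δ = {a : a_i ≥ 0, Σ_i a_i = 1}` and is the unique maximizer of the attacker's
objective over `Δ`: `A(a) < A(a*)` for every `a ∈ Δ` with `a ≠ a*`. -/
theorem optimal_attack_vector (n : ℕ) (hn : 1 ≤ n) (ω : ℝ) (hω : 0 < ω)
    (q : Fin n → ℝ) (hq : ∀ i, q i ∈ Set.Icc (0 : ℝ) 1)
    (D : Fin n → ℝ) (hD : ∀ i, 0 < D i)
    (lam : ℝ) (hlam : ω = ∑ i, max 0 ((1 - q i) * D i + lam))
    (astar : Fin n → ℝ)
    (hastar : ∀ i, astar i = (1 / ω) * max 0 ((1 - q i) * D i + lam)) :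
    ((∀ i, 0 ≤ astar i) ∧ ∑ i, astar i = 1) ∧
    ∀ a : Fin n → ℝ, (∀ i, 0 ≤ a i) → ∑ i, a i = 1 → a ≠ astar →
      attackerObjective n ω q D a < attackerObjective n ω q D astar := by
  have hs : ∀ i, ω * astar i = max 0 ((1 - q i) * D i + lam) := fun i => by
    rw [hastar i]; field_simp
  have hnn : ∀ i, 0 ≤ astar i := fun i => by
    rw [hastar i]; positivity
  have hsum : ∑ i, astar i = 1 := by
    have h : ω * ∑ i, astar i = ω * 1 := by
      rw [Finset.mul_sum, Finset.sum_congr rfl fun i _ => hs i, ← hlam, mul_one]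
    exact mul_left_cancel₀ hω.ne' h
  refine ⟨⟨hnn, hsum⟩, fun a ha hasum hne => ?_⟩
  obtain ⟨j, hj⟩ := Function.ne_iff.mp hne
  have hpos : 0 < ∑ i, (ω / 2) * (a i - astar i) ^ 2 := by
    refine Finset.sum_pos' (fun i _ => by positivity) ⟨j, Finset.mem_univ j, ?_⟩
    have := sub_ne_zero.mpr hj
    positivity
  have key := Finset.sum_le_sum fun i (_ : i ∈ Finset.univ) =>
    attacker_coord_le hω (hs i) (ha i)
  simp only [Finset.sum_add_distrib, ← Finset.mul_sum _ _ lam, hasum, hsum,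
    ← mul_assoc] at key
  unfold attackerObjective
  linarith
end

section
/- Let n ≥ 1, ω > 0, D > 0, and q ∈ [0,1]^n, and let a*(q) be the unique maximizer over the simplex Δ = {a ∈ ℝ^n : a_i ≥ 0, Σ_i a_i = 1} of A(a) = Σ_{i=1}^n ( a_i (1-q_i) D - (ω/2) a_i² ). If q_i = 1 for some agent i, then a*_i(q) ≤ 1/n. -/
/-! If some agent `j` received less attack than the fully invested agent `i`, replacing both
`a*_i` and `a*_j` by their mean would not decrease the linear part of the objective (an attack on
`i` earns nothing) and would strictly decrease the quadratic cost, contradicting maximality.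
Hence `a*_i` is the least coordinate of `a*`, so it is at most their average `1/n`. -/

open Finset

/-- The attacker's objective with a common document count `D`:
`A(a) = Σ_i ( a_i (1-q_i) D - (ω/2) a_i² )`. -/
noncomputable def attackerObjectiveVT (n : ℕ) (ω D : ℝ) (q : Fin n → ℝ)
    (a : Fin n → ℝ) : ℝ :=
  ∑ i, (a i * (1 - q i) * D - (ω / 2) * (a i) ^ 2)

/-- (Vertex-transitive case, `D_i = D > 0`.) If `a*` is the maximizer over the simplex
`Δ = {a : a_i ≥ 0, Σ_i a_i = 1}` of the attacker's objective and agent `i` invests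
maximally, `q_i = 1`, then `a*_i ≤ 1/n`. -/
theorem attack_bound_of_max_investment (n : ℕ) (hn : 1 ≤ n) (ω D : ℝ)
    (hω : 0 < ω) (hD : 0 < D)
    (q : Fin n → ℝ) (hq : ∀ i, q i ∈ Set.Icc (0 : ℝ) 1)
    (astar : Fin n → ℝ) (hpos : ∀ i, 0 ≤ astar i) (hsum : ∑ i, astar i = 1)
    (hmax : ∀ a : Fin n → ℝ, (∀ i, 0 ≤ a i) → ∑ i, a i = 1 →
      attackerObjectiveVT n ω D q a ≤ attackerObjectiveVT n ω D q astar)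
    (i : Fin n) (hi : q i = 1) :
    astar i ≤ 1 / (n : ℝ) := by
  have key : ∀ j, astar i ≤ astar j := by
    intro j
    by_contra! hlt
    have hij : i ≠ j := by rintro rfl; exact lt_irrefl _ hlt
    obtain ⟨t, ht⟩ : ∃ t, t = (astar i - astar j) / 2 := ⟨_, rfl⟩
    -- Moving `t` from `i` to `j` makes both coordinates equal to their mean.
    have h := hmax
      (fun k => astar k + ((if k = j then t else 0) - (if k = i then t else 0))) ?_ ?_
    · have hdiff : attackerObjectiveVT n ω D q
          (fun k => astar k + ((if k = j then t else 0) - (if k = i then t else 0)))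
          = attackerObjectiveVT n ω D q astar
            + ∑ k, ((if k = j then t * (1 - q j) * D - ω / 2 * (2 * astar j * t + t ^ 2) else 0)
              + (if k = i then -(t * (1 - q i) * D) + ω / 2 * (2 * astar i * t - t ^ 2)
                  else 0)) := by
        unfold attackerObjectiveVT
        rw [← Finset.sum_add_distrib]
        refine Finset.sum_congr rfl fun k _ => ?_
        by_cases hkj : k = j
        · subst hkj
          simp only [if_true, if_neg hij.symm]
          ring
        · by_cases hki : k = i
          · subst hki
            simp only [if_true, if_neg hkj]
            ring
          · simp only [if_neg hkj, if_neg hki]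
            ring
      rw [hdiff, Finset.sum_add_distrib] at h
      simp only [Finset.sum_ite_eq', Finset.mem_univ, if_true, hi] at h
      have htpos : 0 < t := by linarith
      have h1 : 0 ≤ t * (1 - q j) * D :=
        mul_nonneg (mul_nonneg htpos.le (by linarith [(hq j).2])) hD.le
      have h2 : 0 < ω * t ^ 2 := by positivity
      have h3 : astar i = astar j + 2 * t := by linarith
      rw [h3] at h
      nlinarith
    · intro k
      have := hpos k
      have := hpos j
      by_cases hkj : k = j
      · subst hkj
        simp only [if_true, if_neg hij.symm]
        linarith
      · by_cases hki : k = i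
        · subst hki
          simp only [if_true, if_neg hkj]
          linarith
        · simp only [if_neg hkj, if_neg hki]
          linarith
    · rw [Finset.sum_add_distrib, Finset.sum_sub_distrib]
      simp [hsum]
  have hcard : (n : ℝ) * astar i ≤ 1 := by
    calc (n : ℝ) * astar i = ∑ _k : Fin n, astar i := by simp
      _ ≤ ∑ k, astar k := Finset.sum_le_sum fun k _ => key k
      _ = 1 := hsum
  have hn' : (0 : ℝ) < n := by exact_mod_cast hn
  rw [le_div_iff₀ hn']
  linarith
end

section
/- Let n ≥ 2, let α ≥ 1 and ω ≥ 1 be reals, and let D be a real with 1 ≤ D ≤ n. For q ∈ [0,1]^n let a*(q) be the unique maximizer over the simplex Δ = {a ∈ ℝ^n : a_i ≥ 0, Σ_i a_i = 1} of A(a) = Σ_{i=1}^n ( a_i (1-q_i) D - (ω/2) a_i² ), and define the social utility S(q) = n - Σ_{j=1}^n a*_j(q) (1-q_j) D - (α/2) Σ_{j=1}^n q_j². Then S attains its maximum over [0,1]^n at the unique point q^{O,S} given by q^{O,S}_i = D/(αn) for all i; that is, S(q) < S(q^{O,S}) for every q ∈ [0,1]^n with q ≠ q^{O,S}. -/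
/-!
Comparing the attacker's best response with the uniform attack `1/n`, whose quadratic cost is the
smallest on the simplex, shows that its expected damage `Σ a*_j (1-q_j) D` is at least the uniform
damage `D (1 - q̄)`, `q̄` the mean of `q`, with equality when `q` is constant. Hence
`S(q) ≤ n - D + (D/n) Σ q_j - (α/2) Σ q_j²`, with equality at constant `q`; completing squares,
the right-hand side falls short of its value at `q_j = c = D/(αn)` by exactly
`(α/2) Σ (q_j - c)²`.
-/

open Finset

/-- Social utility under the strategic attack `a*(q)`:
`S(q) = n - Σ_j a*_j(q)(1-q_j)D - (α/2) Σ_j q_j²`. -/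
noncomputable def socialStrategic (n : ℕ) (α D : ℝ)
    (astar : (Fin n → ℝ) → (Fin n → ℝ)) (q : Fin n → ℝ) : ℝ :=
  (n : ℝ) - (∑ j, astar q j * (1 - q j) * D) - (α / 2) * ∑ j, (q j) ^ 2

/-- The uniform attack has the least quadratic cost on the simplex, so an attack whose objective
is at least that of the uniform one has at least its linear payoff. -/
lemma uniform_damage_le (n : ℕ) (hn : 2 ≤ n) (ω D : ℝ) (hω : 1 ≤ ω) (q a : Fin n → ℝ)
    (hsum : ∑ i, a i = 1)
    (hmax : attackerObjectiveVT n ω D q (fun _ => 1 / (n : ℝ)) ≤ attackerObjectiveVT n ω D q a) :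
    D - D / n * ∑ i, q i ≤ ∑ i, a i * (1 - q i) * D := by
  have hn0 : (0 : ℝ) < n := by exact_mod_cast (by omega : 0 < n)
  have hsq : 1 / (n : ℝ) ≤ ∑ i, (a i) ^ 2 := by
    have h := sq_sum_le_card_mul_sum_sq (s := Finset.univ) (f := a)
    rw [hsum, Finset.card_univ, Fintype.card_fin] at h
    rw [div_le_iff₀ hn0]
    linarith
  have hu : attackerObjectiveVT n ω D q (fun _ => 1 / (n : ℝ))
      = D - D / n * ∑ i, q i - ω / 2 * (1 / n) := by
    have h : ∀ i, 1 / (n : ℝ) * (1 - q i) * D - ω / 2 * (1 / (n : ℝ)) ^ 2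
        = (D / n - ω / 2 * (1 / (n : ℝ)) ^ 2) - D / n * q i := fun i => by ring
    simp only [attackerObjectiveVT, h, Finset.sum_sub_distrib, ← Finset.mul_sum,
      Finset.sum_const, Finset.card_univ, Fintype.card_fin, nsmul_eq_mul]
    field_simp
    ring
  rw [hu, attackerObjectiveVT, Finset.sum_sub_distrib, ← Finset.mul_sum] at hmax
  have := mul_le_mul_of_nonneg_left hsq (by linarith : 0 ≤ ω / 2)
  linarith

/-- (Vertex-transitive case.) Let `n ≥ 2`, `α ≥ 1`, `ω ≥ 1` and `1 ≤ D ≤ n`, and for every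
`q ∈ [0,1]^n` let `a*(q)` be the maximizer over the simplex
`Δ = {a : a_i ≥ 0, Σ_i a_i = 1}` of the attacker's objective. Then the social utility
`S(q) = n - Σ_j a*_j(q)(1-q_j)D - (α/2)Σ_j q_j²` attains its maximum over `[0,1]^n` at the
unique point `q^{O,S}` with `q^{O,S}_i = D/(αn)` for all `i`: that point lies in `[0,1]^n`
and `S(q) < S(q^{O,S})` for every `q ∈ [0,1]^n` with `q ≠ q^{O,S}`. -/
theorem social_optimum_strategic_attack (n : ℕ) (hn : 2 ≤ n) (α ω D : ℝ)
    (hα : 1 ≤ α) (hω : 1 ≤ ω) (hD : 1 ≤ D) (hDn : D ≤ n)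
    (astar : (Fin n → ℝ) → (Fin n → ℝ))
    (hastar : ∀ q : Fin n → ℝ, (∀ i, q i ∈ Set.Icc (0 : ℝ) 1) →
      ((∀ i, 0 ≤ astar q i) ∧ ∑ i, astar q i = 1) ∧
      ∀ a : Fin n → ℝ, (∀ i, 0 ≤ a i) → ∑ i, a i = 1 →
        attackerObjectiveVT n ω D q a ≤ attackerObjectiveVT n ω D q (astar q)) :
    (∀ i : Fin n, D / (α * n) ∈ Set.Icc (0 : ℝ) 1) ∧
    ∀ q : Fin n → ℝ, (∀ i, q i ∈ Set.Icc (0 : ℝ) 1) →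
      q ≠ (fun _ => D / (α * n)) →
      socialStrategic n α D astar q <
        socialStrategic n α D astar (fun _ => D / (α * n)) := by
  have hn0 : (0 : ℝ) < n := by exact_mod_cast (by omega : 0 < n)
  have hα0 : 0 < α := by linarith
  have hc : ∀ _ : Fin n, D / (α * n) ∈ Set.Icc (0 : ℝ) 1 := by
    refine fun _ => ⟨by positivity, ?_⟩
    rw [div_le_one (by positivity)]
    nlinarith
  refine ⟨hc, fun q hq hne => ?_⟩
  have hDc : D / n = α * (D / (α * n)) := by field_simp
  set c := D / (α * n) with hcdef
  obtain ⟨⟨-, hsum⟩, hmax⟩ := hastar q hq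
  have hlow := uniform_damage_le n hn ω D hω q (astar q) hsum
    (hmax _ (fun _ => by positivity) (by simp [hn0.ne']))
  have hS : socialStrategic n α D astar (fun _ => c)
      = n - (1 - c) * D - α / 2 * (n * c ^ 2) := by
    obtain ⟨⟨-, h1⟩, -⟩ := hastar (fun _ => c) hc
    simp only [socialStrategic, ← Finset.sum_mul, h1, Finset.sum_const, Finset.card_univ,
      Fintype.card_fin, nsmul_eq_mul, one_mul]
  have hpos : 0 < ∑ i, (q i - c) ^ 2 := by
    obtain ⟨i, hi⟩ := Function.ne_iff.mp hne
    exact Finset.sum_pos' (fun _ _ => sq_nonneg _)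
      ⟨i, Finset.mem_univ i, by have := sub_ne_zero.mpr hi; positivity⟩
  have hexp : ∑ i, (q i - c) ^ 2 = ∑ i, (q i) ^ 2 - 2 * c * ∑ i, q i + n * c ^ 2 := by
    have h : ∀ i, (q i - c) ^ 2 = (q i) ^ 2 - 2 * c * q i + c ^ 2 := fun i => by ring
    simp only [h, Finset.sum_add_distrib, Finset.sum_sub_distrib, ← Finset.mul_sum,
      Finset.sum_const, Finset.card_univ, Fintype.card_fin, nsmul_eq_mul]
  rw [hS, socialStrategic]
  rw [hDc] at hlow
  have hgap : 0 < α / 2 * ∑ i, (q i - c) ^ 2 := by positivity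
  rw [hexp] at hgap
  have hcD : c * D = α * n * c ^ 2 := by
    rw [hcdef]
    field_simp
  linarith
end

section
/- Let n ≥ 2 be an integer and let α ≥ 1, ω ≥ 1, and D be reals with 1 ≤ D < n. Then 1/(αn) < ((n-D)D + ω) / ((n-D)D + αnω); that is, the equilibrium investment against a random attack is strictly smaller than the equilibrium investment against a strategic attack. -/
/-- For `n ≥ 2` agents, cost parameters `α ≥ 1` and `ω ≥ 1`, and expected document count
`1 ≤ D < n`, the equilibrium investment against a random attack is strictly smaller than
the equilibrium investment against a strategic attack:
`1/(αn) < ((n-D)D + ω)/((n-D)D + αnω)`. -/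
theorem random_lt_strategic_equilibrium (n : ℕ) (hn : 2 ≤ n) (α ω D : ℝ)
    (hα : 1 ≤ α) (hω : 1 ≤ ω) (hD : 1 ≤ D) (hDn : D < n) :
    1 / (α * n) < (((n : ℝ) - D) * D + ω) / (((n : ℝ) - D) * D + α * n * ω) := by
  have hn' : (2 : ℝ) ≤ n := by exact_mod_cast hn
  have hA : 0 < ((n : ℝ) - D) * D := mul_pos (by linarith) (by linarith)
  have hm : 1 < α * n := by nlinarith
  rw [div_lt_div_iff₀ (by positivity) (by positivity)]
  -- Expanded, both sides contain `α * n * ω`; what remains is `A < A * (α * n)`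
  -- with `A = (n - D) * D`.
  nlinarith [mul_lt_mul_of_pos_left hm hA]
end

section
/- Let n ≥ 2 be an integer and let α ≥ 1, ω ≥ 1, and D be reals with 1 ≤ D ≤ n satisfying 2(n-D)D ≥ (n-2D)(αn - 1). Then 1/(αn) > (αn - 1) ω (n - 2D) / ((n-D)D + αωn)²; that is, the derivative with respect to D of the socially optimal investment D/(αn) strictly exceeds the derivative with respect to D of the strategic equilibrium investment ((n-D)D + ω)/((n-D)D + αnω). -/
/-- For `n ≥ 2` agents, cost parameters `α ≥ 1` and `ω ≥ 1`, and expected document count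
`1 ≤ D ≤ n` satisfying `2(n-D)D ≥ (n-2D)(αn - 1)`, the derivative in `D` of the socially
optimal investment strictly exceeds the derivative in `D` of the strategic equilibrium
investment: `1/(αn) > (αn - 1) ω (n - 2D) / ((n-D)D + αωn)²`. -/
theorem derivative_comparison (n : ℕ) (hn : 2 ≤ n) (α ω D : ℝ)
    (hα : 1 ≤ α) (hω : 1 ≤ ω) (hD : 1 ≤ D) (hDn : D ≤ n)
    (hcond : 2 * ((n : ℝ) - D) * D ≥ ((n : ℝ) - 2 * D) * (α * n - 1)) :
    (α * n - 1) * ω * ((n : ℝ) - 2 * D) / ((((n : ℝ) - D) * D + α * ω * n) ^ 2) <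
      1 / (α * n) := by
  have hn' : (2 : ℝ) ≤ n := by exact_mod_cast hn
  have ha : 0 < α * n := by positivity
  have hX : 0 ≤ ((n : ℝ) - D) * D := mul_nonneg (by linarith) (by linarith)
  have haω : 0 < α * ω * n := by positivity
  rw [div_lt_div_iff₀ (by positivity) ha]
  -- With `X = (n - D) * D` and `c = α * ω * n`, the hypothesis scaled by `c` bounds the left side
  -- by `2 * X * c`, which is less than `(X + c) ^ 2` since `c > 0`.
  have h := mul_le_mul_of_nonneg_left hcond haω.le
  have hc2 : 0 < (α * ω * n) ^ 2 := by positivity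
  nlinarith [sq_nonneg (((n : ℝ) - D) * D)]
end
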